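/- (Lemma on dependence of the holomorphicity equations.) Let Ω ⊆ ℂ be open and let L : Fin 3 → Fin 3 → Fin 3 → ℝ be real constants, written Lⁱⱼₖ, satisfying Lˡⱼₖ + Lᵏⱼₗ = 0 for all j, k, l ∈ {1,2,3}. Let ψ₁, ψ₂, ψ₃ : Ω → ℂ be (real-)differentiable functions with ψ₃² = −ψ₁² − ψ₂² on Ω and ψ₃(z) ≠ 0 for all z ∈ Ω. If ψ₁ and ψ₂ satisfy the first two holomorphicity equations ∂ψᵢ/∂z̄ + Σ_{j,k=1}^{3} Lⁱⱼₖ · conj(ψⱼ) · ψₖ = 0 on Ω for i = 1, 2, then ψ₃ satisfies the third equation: ∂ψ₃/∂z̄ + Σ_{j,k=1}^{3} L³ⱼₖ · conj(ψⱼ) · ψₖ = 0 on Ω. -/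

import Mathlib

/-!
The proof is pointwise. Write `Sᵢ = ∑ⱼₖ Lⁱⱼₖ conj(ψⱼ) ψₖ`. Applying `∂/∂z̄` to the identity
`ψ₁² + ψ₂² + ψ₃² = 0`, which holds on an open set, gives `∑ᵢ ψᵢ ∂ψᵢ/∂z̄ = 0`
(`sum_mul_wirtingerBar_eq_zero`). The antisymmetry of `L` in its first and last indices gives
`∑ᵢ ψᵢ Sᵢ = 0` (`sum_mul_connection_eq_zero`). Adding the two, `∑ᵢ ψᵢ (∂ψᵢ/∂z̄ + Sᵢ) = 0`; the first
two terms vanish by hypothesis, so `ψ₃ (∂ψ₃/∂z̄ + S₃) = 0`, and `ψ₃ ≠ 0`.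
-/

open Finset Complex

/-- The Wirtinger derivative `∂ψ/∂z̄ = (1/2)(∂ψ/∂u + i ∂ψ/∂v)` of `ψ : ℂ → ℂ` at `z`. -/
noncomputable def wirtingerBar (ψ : ℂ → ℂ) (z : ℂ) : ℂ :=
  (1 / 2 : ℂ) * (fderiv ℝ ψ z 1 + Complex.I • fderiv ℝ ψ z Complex.I)

/-- The conformality relation `ψ₁² + ψ₂² + ψ₃² = 0`, differentiated. It is needed on a neighbourhood of
`z`, not only at `z`. -/
lemma sum_mul_wirtingerBar_eq_zero (ψ : Fin 3 → ℂ → ℂ) (z : ℂ)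
    (hdiff : ∀ i, DifferentiableAt ℝ (ψ i) z)
    (hsq : ∀ᶠ w in nhds z, ∑ i, ψ i w ^ 2 = 0) :
    ∑ i, ψ i z * wirtingerBar (ψ i) z = 0 := by
  have hder : HasFDerivAt (fun w => ∑ i, ψ i w * ψ i w)
      (∑ i, (ψ i z • fderiv ℝ (ψ i) z + ψ i z • fderiv ℝ (ψ i) z)) z :=
    HasFDerivAt.fun_sum fun i _ => (hdiff i).hasFDerivAt.mul (hdiff i).hasFDerivAt
  have hzero : HasFDerivAt (fun w => ∑ i, ψ i w * ψ i w) (0 : ℂ →L[ℝ] ℂ) z := by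
    refine (hasFDerivAt_const (0 : ℂ) z).congr_of_eventuallyEq ?_
    filter_upwards [hsq] with w hw
    simpa only [sq] using hw
  have hD := hder.unique hzero
  have h1 := congrArg (fun T : ℂ →L[ℝ] ℂ => T 1) hD
  have hI := congrArg (fun T : ℂ →L[ℝ] ℂ => T Complex.I) hD
  simp [Fin.sum_univ_three] at h1 hI
  simp only [wirtingerBar, Fin.sum_univ_three, smul_eq_mul]
  linear_combination (1 / 4 : ℂ) * h1 + (1 / 4 : ℂ) * Complex.I * hI

/-- For each fixed `j`, the matrix `(Lⁱⱼₖ)ᵢₖ` is skew, so its quadratic form vanishes. -/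
lemma sum_mul_connection_eq_zero (L : Fin 3 → Fin 3 → Fin 3 → ℝ)
    (hL : ∀ j k l : Fin 3, L l j k + L k j l = 0) (a b : Fin 3 → ℂ) :
    ∑ i, a i * ∑ j, ∑ k, (L i j k : ℂ) * b j * a k = 0 := by
  have hLC : ∀ j k l : Fin 3, (L l j k : ℂ) + L k j l = 0 := fun j k l => by
    exact_mod_cast hL j k l
  have hswap : ∑ i, a i * ∑ j, ∑ k, (L i j k : ℂ) * b j * a k
      = ∑ i, ∑ j, ∑ k, a i * ((L k j i : ℂ) * b j * a k) * (-1) := by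
    simp only [Finset.mul_sum]
    refine Finset.sum_congr rfl fun i _ => Finset.sum_congr rfl fun j _ =>
      Finset.sum_congr rfl fun k _ => ?_
    linear_combination a i * b j * a k * hLC j k i
  have hrename : ∑ i, ∑ j, ∑ k, a i * ((L k j i : ℂ) * b j * a k) * (-1)
      = -∑ i, a i * ∑ j, ∑ k, (L i j k : ℂ) * b j * a k := by
    simp only [Fin.sum_univ_three]
    ring
  exact self_eq_neg.mp (hswap.trans hrename)

/-- Lemma on dependence of the holomorphicity equations: if `Lˡⱼₖ + Lᵏⱼₗ = 0`, the functions
`ψ₁, ψ₂, ψ₃` are real-differentiable on an open `Ω` with `ψ₃² = -ψ₁² - ψ₂²` and `ψ₃ ≠ 0` on `Ω`,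
and `ψ₁, ψ₂` satisfy the first two holomorphicity equations, then `ψ₃` satisfies the third:
`∂ψ₃/∂z̄ + Σ_{j,k} L³ⱼₖ conj(ψⱼ) ψₖ = 0` on `Ω`. -/
theorem stmt_4 (Ω : Set ℂ) (hΩ : IsOpen Ω) (L : Fin 3 → Fin 3 → Fin 3 → ℝ)
    (hL : ∀ j k l : Fin 3, L l j k + L k j l = 0)
    (ψ : Fin 3 → ℂ → ℂ)
    (hdiff : ∀ i : Fin 3, ∀ z ∈ Ω, DifferentiableAt ℝ (ψ i) z)
    (hsq : ∀ z ∈ Ω, (ψ 2 z) ^ 2 = -(ψ 0 z) ^ 2 - (ψ 1 z) ^ 2)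
    (hne : ∀ z ∈ Ω, ψ 2 z ≠ 0)
    (heq0 : ∀ z ∈ Ω, wirtingerBar (ψ 0) z
      + ∑ j : Fin 3, ∑ k : Fin 3, (L 0 j k : ℂ) * (starRingEnd ℂ) (ψ j z) * ψ k z = 0)
    (heq1 : ∀ z ∈ Ω, wirtingerBar (ψ 1) z
      + ∑ j : Fin 3, ∑ k : Fin 3, (L 1 j k : ℂ) * (starRingEnd ℂ) (ψ j z) * ψ k z = 0) :
    ∀ z ∈ Ω, wirtingerBar (ψ 2) z
      + ∑ j : Fin 3, ∑ k : Fin 3, (L 2 j k : ℂ) * (starRingEnd ℂ) (ψ j z) * ψ k z = 0 := by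
  intro z hz
  have hW := sum_mul_wirtingerBar_eq_zero ψ z (fun i => hdiff i z hz) (by
    filter_upwards [hΩ.mem_nhds hz] with w hw
    rw [Fin.sum_univ_three]
    linear_combination hsq w hw)
  have hS := sum_mul_connection_eq_zero L hL (fun i => ψ i z) (fun j => (starRingEnd ℂ) (ψ j z))
  rw [Fin.sum_univ_three] at hW hS
  refine (mul_eq_zero.mp ?_).resolve_left (hne z hz)
  linear_combination hW + hS - ψ 0 z * heq0 z hz - ψ 1 z * heq1 z hz
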